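/- arXiv:1902.06020 — 2 statements merged into one kernel-verified Lean document; each statement's English description precedes it below -/
import Mathlib

section
/- There exists a constant C > 0 such that for every positive integer k, if V_k is a random variable with the Beta(k, 3k) distribution, then E|log(4V_k)| ≤ C·k^{-1/2}; that is, ∫₀¹ |log(4x)| · x^{k-1}(1-x)^{3k-1}/B(k,3k) dx ≤ C·k^{-1/2}. In particular E|log(4V_k)| = O(k^{-1/2}) as k → ∞. -/
/-!
Put `Y = V / E V` for `V ~ Beta(α, β)`. Since `1 + t² / 2 ≤ cosh t`, taking `t = (log Y) / 2` gives
`(log Y)² ≤ 4 (Y^{1/2} + Y^{-1/2} - 2)`. The recurrence of the Beta function turns the moment of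
order `-1/2` into a multiple of the one of order `1/2`, which is at most `1` by the AM-GM inequality
and `E Y = 1`. Hence `E (log Y)² ≤ 4 β / ((α + β) (2 α - 1))`, and the first moment follows by
Cauchy-Schwarz. The order `1/2`, rather than `1`, is what makes `α = 1` admissible.
-/

section

open MeasureTheory ProbabilityTheory Set

theorem one_add_sq_div_two_le_cosh (x : ℝ) : 1 + x ^ 2 / 2 ≤ Real.cosh x := by
  have sq_le : |x / 2| ^ 2 ≤ Real.sinh |x / 2| ^ 2 :=
    pow_le_pow_left₀ (abs_nonneg _) (Real.self_le_sinh_iff.2 (abs_nonneg _)) 2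
  have cosh_eq : Real.cosh x = 1 + 2 * Real.sinh (x / 2) ^ 2 := by
    rw [← mul_div_cancel₀ x two_ne_zero, Real.cosh_two_mul, Real.cosh_sq]
    ring_nf
  rw [← Real.abs_sinh, sq_abs, sq_abs] at sq_le
  linarith

theorem sq_log_le_add_inv_sub_two {x : ℝ} (hx : 0 < x) : Real.log x ^ 2 ≤ x + x⁻¹ - 2 := by
  have := one_add_sq_div_two_le_cosh (Real.log x)
  rw [Real.cosh_log hx] at this
  linarith

theorem sq_mul_log_le_rpow_add_rpow_neg_sub_two {x : ℝ} (hx : 0 < x) (r : ℝ) :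
    (r * Real.log x) ^ 2 ≤ x ^ r + x ^ (-r) - 2 := by
  rw [← Real.log_rpow hx, Real.rpow_neg hx.le]
  exact sq_log_le_add_inv_sub_two (Real.rpow_pos_of_pos hx r)

theorem sq_integral_le_integral_sq {Ω : Type*} [MeasurableSpace Ω] {μ : Measure Ω}
    [IsProbabilityMeasure μ] {X : Ω → ℝ} (hX : MemLp X 2 μ) :
    (∫ ω, X ω ∂μ) ^ 2 ≤ ∫ ω, X ω ^ 2 ∂μ := by
  have := variance_nonneg X μ
  rw [variance_eq_sub hX] at this
  simpa using this

variable {α β : ℝ}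

theorem beta_add_one_left (hα : 0 < α) (hβ : 0 < β) :
    beta (α + 1) β = α / (α + β) * beta α β := by
  have hαβ : α + β ≠ 0 := by positivity
  have hΓ : Real.Gamma (α + β) ≠ 0 := (Real.Gamma_pos_of_pos (by positivity)).ne'
  rw [beta, beta, Real.Gamma_add_one hα.ne', add_right_comm, Real.Gamma_add_one hαβ]
  field_simp

theorem measurable_betaPDF (α β : ℝ) : Measurable (betaPDF α β) :=
  (measurable_betaPDFReal α β).ennreal_ofReal

theorem betaPDFReal_nonneg (hα : 0 < α) (hβ : 0 < β) (x : ℝ) : 0 ≤ betaPDFReal α β x := by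
  by_cases hx : 0 < x ∧ x < 1
  · exact (betaPDFReal_pos hx.1 hx.2 hα hβ).le
  · simp [betaPDFReal, hx]

theorem integrable_betaPDFReal (hα : 0 < α) (hβ : 0 < β) : Integrable (betaPDFReal α β) := by
  rw [← lintegral_ofReal_ne_top_iff_integrable
    (stronglyMeasurable_betaPDFReal α β).aestronglyMeasurable
    (ae_of_all _ (betaPDFReal_nonneg hα hβ))]
  exact (lintegral_betaPDF_eq_one hα hβ).trans_ne ENNReal.one_ne_top

theorem integral_betaPDFReal (hα : 0 < α) (hβ : 0 < β) : ∫ x, betaPDFReal α β x = 1 := by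
  rw [integral_eq_lintegral_of_nonneg_ae (ae_of_all _ (betaPDFReal_nonneg hα hβ))
    (stronglyMeasurable_betaPDFReal α β).aestronglyMeasurable]
  exact (congrArg ENNReal.toReal (lintegral_betaPDF_eq_one hα hβ)).trans ENNReal.toReal_one

theorem betaPDFReal_mul_rpow {s : ℝ} (hα : 0 < α) (hβ : 0 < β) (hs : 0 < α + s) (x : ℝ) :
    betaPDFReal α β x * x ^ s = beta (α + s) β / beta α β * betaPDFReal (α + s) β x := by
  by_cases hx : 0 < x ∧ x < 1
  · have h_beta := (beta_pos hα hβ).ne'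
    have h_beta_add := (beta_pos hs hβ).ne'
    simp only [betaPDFReal, if_pos hx]
    rw [add_sub_right_comm, Real.rpow_add hx.1]
    field_simp
  · simp [betaPDFReal, hx]

theorem integral_betaMeasure (hα : 0 < α) (hβ : 0 < β) (f : ℝ → ℝ) :
    ∫ x, f x ∂betaMeasure α β = ∫ x, betaPDFReal α β x * f x := by
  rw [betaMeasure, integral_withDensity_eq_integral_toReal_smul
    (measurable_betaPDF α β) (ae_of_all _ fun _ ↦ ENNReal.ofReal_lt_top)]
  simp only [betaPDF, ENNReal.toReal_ofReal (betaPDFReal_nonneg hα hβ _), smul_eq_mul]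

theorem integrable_betaMeasure_iff (hα : 0 < α) (hβ : 0 < β) {f : ℝ → ℝ} :
    Integrable f (betaMeasure α β) ↔ Integrable fun x ↦ betaPDFReal α β x * f x := by
  rw [betaMeasure, integrable_withDensity_iff_integrable_smul'
    (measurable_betaPDF α β) (ae_of_all _ fun _ ↦ ENNReal.ofReal_lt_top)]
  simp only [betaPDF, ENNReal.toReal_ofReal (betaPDFReal_nonneg hα hβ _), smul_eq_mul]

theorem ae_betaMeasure_mem_Ioo (α β : ℝ) : ∀ᵐ x ∂betaMeasure α β, x ∈ Ioo (0 : ℝ) 1 := by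
  rw [betaMeasure, ae_withDensity_iff (measurable_betaPDF α β)]
  refine ae_of_all _ fun x hx ↦ ?_
  by_contra h
  exact hx (by simp [betaPDF, betaPDFReal, show ¬(0 < x ∧ x < 1) from h])

theorem integral_betaMeasure_eq_intervalIntegral_div (hα : 0 < α) (hβ : 0 < β) (f : ℝ → ℝ) :
    ∫ x, f x ∂betaMeasure α β =
      ∫ x in (0 : ℝ)..1, f x * (x ^ (α - 1) * (1 - x) ^ (β - 1)) /
        ∫ t in (0 : ℝ)..1, t ^ (α - 1) * (1 - t) ^ (β - 1) := by
  have integral_eq (g : ℝ → ℝ) : ∫ x, betaPDFReal α β x * g x =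
      (∫ x in (0 : ℝ)..1, g x * (x ^ (α - 1) * (1 - x) ^ (β - 1))) / beta α β := by
    rw [intervalIntegral.integral_of_le zero_le_one, integral_Ioc_eq_integral_Ioo,
      ← integral_div, ← integral_indicator measurableSet_Ioo]
    refine integral_congr_ae (ae_of_all _ fun x ↦ ?_)
    simp only [betaPDFReal, indicator_apply, mem_Ioo]
    split_ifs <;> ring
  have beta_eq : beta α β = ∫ t in (0 : ℝ)..1, t ^ (α - 1) * (1 - t) ^ (β - 1) := by
    have := integral_eq fun _ ↦ 1
    simp only [mul_one, one_mul, integral_betaPDFReal hα hβ] at this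
    exact ((div_eq_one_iff_eq (beta_pos hα hβ).ne').1 this.symm).symm
  rw [integral_betaMeasure hα hβ, integral_eq, ← beta_eq, intervalIntegral.integral_div]

theorem integrable_rpow_betaMeasure {s : ℝ} (hα : 0 < α) (hβ : 0 < β) (hs : 0 < α + s) :
    Integrable (fun x ↦ x ^ s) (betaMeasure α β) := by
  simp only [integrable_betaMeasure_iff hα hβ, betaPDFReal_mul_rpow hα hβ hs]
  exact (integrable_betaPDFReal hs hβ).const_mul _

theorem integral_rpow_betaMeasure {s : ℝ} (hα : 0 < α) (hβ : 0 < β) (hs : 0 < α + s) :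
    ∫ x, x ^ s ∂betaMeasure α β = beta (α + s) β / beta α β := by
  simp only [integral_betaMeasure hα hβ, betaPDFReal_mul_rpow hα hβ hs]
  rw [integral_const_mul, integral_betaPDFReal hs hβ, mul_one]

theorem integral_rpow_add_one_betaMeasure {s : ℝ} (hα : 0 < α) (hβ : 0 < β) (hs : 0 < α + s) :
    ∫ x, x ^ (s + 1) ∂betaMeasure α β =
      (α + s) / (α + s + β) * ∫ x, x ^ s ∂betaMeasure α β := by
  rw [integral_rpow_betaMeasure hα hβ (by linarith), integral_rpow_betaMeasure hα hβ hs,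
    ← add_assoc, beta_add_one_left hs hβ, mul_div_assoc]

theorem integral_id_betaMeasure (hα : 0 < α) (hβ : 0 < β) :
    ∫ x, x ∂betaMeasure α β = α / (α + β) := by
  have := isProbabilityMeasureBeta hα hβ
  simpa using integral_rpow_add_one_betaMeasure (s := 0) hα hβ (by simpa)

theorem ae_betaMeasure_mul_rpow {c : ℝ} (hc : 0 ≤ c) (α β s : ℝ) :
    (fun x ↦ (c * x) ^ s) =ᵐ[betaMeasure α β] fun x ↦ c ^ s * x ^ s := by
  filter_upwards [ae_betaMeasure_mem_Ioo α β] with x hx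
  exact Real.mul_rpow hc hx.1.le

theorem integrable_mul_rpow_betaMeasure {c s : ℝ} (hc : 0 ≤ c) (hα : 0 < α) (hβ : 0 < β)
    (hs : 0 < α + s) : Integrable (fun x ↦ (c * x) ^ s) (betaMeasure α β) :=
  ((integrable_rpow_betaMeasure hα hβ hs).const_mul _).congr
    (ae_betaMeasure_mul_rpow hc α β s).symm

theorem integral_mul_rpow_betaMeasure {c : ℝ} (hc : 0 ≤ c) (α β s : ℝ) :
    ∫ x, (c * x) ^ s ∂betaMeasure α β = c ^ s * ∫ x, x ^ s ∂betaMeasure α β := by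
  rw [integral_congr_ae (ae_betaMeasure_mul_rpow hc α β s), integral_const_mul]

theorem integral_div_mean_rpow_betaMeasure_le_one {s : ℝ} (hα : 0 < α) (hβ : 0 < β)
    (hs₀ : 0 ≤ s) (hs₁ : s ≤ 1) :
    ∫ x, ((α + β) / α * x) ^ s ∂betaMeasure α β ≤ 1 := by
  have := isProbabilityMeasureBeta hα hβ
  have hc : 0 ≤ (α + β) / α := by positivity
  have h_id : Integrable (fun x ↦ (α + β) / α * x) (betaMeasure α β) := by
    simpa using integrable_mul_rpow_betaMeasure (s := 1) hc hα hβ (by positivity)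
  have h_sub : Integrable (fun x ↦ (α + β) / α * x - 1) (betaMeasure α β) :=
    h_id.sub (integrable_const 1)
  calc
    _ ≤ ∫ x, (1 + s * ((α + β) / α * x - 1)) ∂betaMeasure α β := by
      refine integral_mono_ae (integrable_mul_rpow_betaMeasure hc hα hβ (by positivity))
        ((integrable_const 1).add (h_sub.const_mul s)) ?_
      filter_upwards [ae_betaMeasure_mem_Ioo α β] with x hx
      have hx₀ : 0 ≤ (α + β) / α * x := mul_nonneg hc hx.1.le
      simpa using rpow_one_add_le_one_add_mul_self
        (show -1 ≤ (α + β) / α * x - 1 by linarith) hs₀ hs₁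
    _ = 1 + s * ((α + β) / α * (α / (α + β)) - 1) := by
      rw [integral_add (integrable_const 1) (h_sub.const_mul s), integral_const_mul,
        integral_sub h_id (integrable_const 1), integral_const_mul,
        integral_id_betaMeasure hα hβ]
      simp
    _ = 1 := by
      field_simp
      ring

theorem integral_div_mean_rpow_betaMeasure_le_of_nonpos {s : ℝ} (hα : 0 < α) (hβ : 0 < β)
    (hs : 0 < α + s) (hs₀ : -1 ≤ s) (hs₁ : s ≤ 0) :
    ∫ x, ((α + β) / α * x) ^ s ∂betaMeasure α β ≤
      α * (α + s + β) / ((α + β) * (α + s)) := by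
  have hc : 0 < (α + β) / α := by positivity
  have h_le := integral_div_mean_rpow_betaMeasure_le_one (s := s + 1) hα hβ
    (by linarith) (by linarith)
  rw [integral_mul_rpow_betaMeasure hc.le, integral_rpow_add_one_betaMeasure hα hβ hs,
    Real.rpow_add_one hc.ne'] at h_le
  rw [integral_mul_rpow_betaMeasure hc.le, le_div_iff₀ (by positivity)]
  rw [← mul_le_mul_iff_right₀ (show 0 < α * (α + s + β) by positivity)] at h_le
  convert h_le using 1 <;> field_simp

theorem memLp_two_log_mul_betaMeasure {c : ℝ} (hc : 0 < c) (hα : 0 < α) (hβ : 0 < β) :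
    MemLp (fun x ↦ Real.log (c * x)) 2 (betaMeasure α β) := by
  have := isProbabilityMeasureBeta hα hβ
  have h_meas : Measurable fun x ↦ Real.log (c * x) := by fun_prop
  refine (memLp_two_iff_integrable_sq h_meas.aestronglyMeasurable).2 ?_
  have h_int : Integrable (fun x ↦ (α / 2)⁻¹ ^ 2 *
      ((c * x) ^ (α / 2) + (c * x) ^ (-(α / 2)) - 2)) (betaMeasure α β) :=
    (((integrable_mul_rpow_betaMeasure hc.le hα hβ (by positivity)).add
      (integrable_mul_rpow_betaMeasure hc.le hα hβ (by linarith))).sub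
      (integrable_const 2)).const_mul _
  refine h_int.mono' (h_meas.pow_const 2).aestronglyMeasurable ?_
  filter_upwards [ae_betaMeasure_mem_Ioo α β] with x hx
  have := sq_mul_log_le_rpow_add_rpow_neg_sub_two (mul_pos hc hx.1) (α / 2)
  rw [Real.norm_of_nonneg (sq_nonneg _), inv_pow, ← div_eq_inv_mul, le_div_iff₀' (by positivity),
    ← mul_pow]
  exact this

theorem integral_sq_log_div_mean_betaMeasure_le (hα : 1 / 2 < α) (hβ : 0 < β) :
    ∫ x, Real.log ((α + β) / α * x) ^ 2 ∂betaMeasure α β ≤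
      4 * (β / ((α + β) * (2 * α - 1))) := by
  have hα₀ : 0 < α := by linarith
  have hα₁ : α * 2 - 1 ≠ 0 := (show 0 < α * 2 - 1 by linarith).ne'
  have := isProbabilityMeasureBeta hα₀ hβ
  have hc : 0 < (α + β) / α := by positivity
  have h_pos := integrable_mul_rpow_betaMeasure (s := 1 / 2) hc.le hα₀ hβ (by positivity)
  have h_neg := integrable_mul_rpow_betaMeasure (s := -(1 / 2)) hc.le hα₀ hβ (by linarith)
  have h_add : Integrable (fun x ↦ ((α + β) / α * x) ^ (1 / 2 : ℝ) +
      ((α + β) / α * x) ^ (-(1 / 2) : ℝ)) (betaMeasure α β) := h_pos.add h_neg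
  calc
    _ ≤ ∫ x, 4 * (((α + β) / α * x) ^ (1 / 2 : ℝ) + ((α + β) / α * x) ^ (-(1 / 2) : ℝ) - 2)
          ∂betaMeasure α β := by
      refine integral_mono_ae (memLp_two_log_mul_betaMeasure hc hα₀ hβ).integrable_sq
        ((h_add.sub (integrable_const 2)).const_mul 4) ?_
      filter_upwards [ae_betaMeasure_mem_Ioo α β] with x hx
      have := sq_mul_log_le_rpow_add_rpow_neg_sub_two (mul_pos hc hx.1) (1 / 2)
      linarith
    _ = 4 * (∫ x, ((α + β) / α * x) ^ (1 / 2 : ℝ) ∂betaMeasure α β +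
          ∫ x, ((α + β) / α * x) ^ (-(1 / 2) : ℝ) ∂betaMeasure α β - 2) := by
      rw [integral_const_mul, integral_sub h_add (integrable_const 2),
        integral_add h_pos h_neg]
      simp
    _ ≤ 4 * (1 + α * (α + -(1 / 2) + β) / ((α + β) * (α + -(1 / 2))) - 2) := by
      gcongr
      · exact integral_div_mean_rpow_betaMeasure_le_one hα₀ hβ (by norm_num) (by norm_num)
      · exact integral_div_mean_rpow_betaMeasure_le_of_nonpos hα₀ hβ (by linarith)
          (by norm_num) (by norm_num)
    _ = 4 * (β / ((α + β) * (2 * α - 1))) := by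
      rw [show α + -(1 / 2) = (2 * α - 1) / 2 by ring]
      field_simp
      ring

theorem integral_abs_log_div_mean_betaMeasure_le (hα : 1 / 2 < α) (hβ : 0 < β) :
    ∫ x, |Real.log ((α + β) / α * x)| ∂betaMeasure α β ≤
      2 * √(β / ((α + β) * (2 * α - 1))) := by
  have hα₀ : 0 < α := by linarith
  have := isProbabilityMeasureBeta hα₀ hβ
  have h_memLp := memLp_two_log_mul_betaMeasure (c := (α + β) / α) (by positivity) hα₀ hβ
  calc
    _ ≤ √(∫ x, |Real.log ((α + β) / α * x)| ^ 2 ∂betaMeasure α β) :=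
      Real.le_sqrt_of_sq_le (sq_integral_le_integral_sq h_memLp.abs)
    _ ≤ √(2 ^ 2 * (β / ((α + β) * (2 * α - 1)))) := by
      simp only [sq_abs]
      rw [show (2 : ℝ) ^ 2 = 4 by norm_num]
      exact Real.sqrt_le_sqrt (integral_sq_log_div_mean_betaMeasure_le hα hβ)
    _ = 2 * √(β / ((α + β) * (2 * α - 1))) := by
      rw [Real.sqrt_mul (by positivity), Real.sqrt_sq zero_le_two]

end

theorem beta_k_3k_log_moment_bound_general {α β : ℝ} (hα : 1 ≤ α) (hβ : 0 < β) :
    ∫ x in (0 : ℝ)..1, |Real.log ((α + β) / α * x)| * (x ^ (α - 1) * (1 - x) ^ (β - 1)) /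
        (∫ t in (0 : ℝ)..1, t ^ (α - 1) * (1 - t) ^ (β - 1)) ≤
      2 * α ^ (-(1 / 2 : ℝ)) := by
  have hα₀ : 0 < α := by linarith
  have ratio_le : β / ((α + β) * (2 * α - 1)) ≤ α⁻¹ := by
    rw [inv_eq_one_div, div_le_div_iff₀ (mul_pos (by positivity) (by linarith)) hα₀]
    nlinarith
  rw [← integral_betaMeasure_eq_intervalIntegral_div hα₀ hβ fun x ↦
    |Real.log ((α + β) / α * x)|, Real.rpow_neg hα₀.le, ← Real.sqrt_eq_rpow, ← Real.sqrt_inv]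
  exact (integral_abs_log_div_mean_betaMeasure_le (by linarith) hβ).trans (by gcongr)

/-- There is a constant `C > 0` such that for every `k ≥ 1`, if
`V_k ~ Beta(k, 3k)` then `E|log(4 V_k)| ≤ C k^{-1/2}`, i.e.
`∫₀¹ |log(4x)| · x^{k-1}(1-x)^{3k-1} / B(k,3k) dx ≤ C · k^{-1/2}`,
where `B(k,3k) = ∫₀¹ x^{k-1}(1-x)^{3k-1} dx`. In particular
`E|log(4 V_k)| = O(k^{-1/2})` as `k → ∞`. -/
theorem beta_k_3k_log_moment_bound :
    ∃ C : ℝ, 0 < C ∧ ∀ k : ℕ, 0 < k →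
      (∫ x in (0:ℝ)..1, |Real.log (4 * x)| * (x ^ (k - 1) * (1 - x) ^ (3 * k - 1)) /
          (∫ t in (0:ℝ)..1, t ^ (k - 1) * (1 - t) ^ (3 * k - 1))) ≤
        C * (k : ℝ) ^ (-(1 / 2 : ℝ)) := by
  refine ⟨2, two_pos, fun k hk ↦ ?_⟩
  have hk₁ : (1 : ℝ) ≤ k := by exact_mod_cast hk
  have mean_inv : ((k : ℝ) + 3 * k) / k = 4 := by
    field_simp
    norm_num
  have cast_sub_one : (k : ℝ) - 1 = ((k - 1 : ℕ) : ℝ) := (Nat.cast_pred hk).symm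
  have cast_three_mul_sub_one : 3 * (k : ℝ) - 1 = ((3 * k - 1 : ℕ) : ℝ) := by
    rw [Nat.cast_pred (by positivity), Nat.cast_mul, Nat.cast_ofNat]
  simpa only [mean_inv, cast_sub_one, cast_three_mul_sub_one, Real.rpow_natCast] using
    beta_k_3k_log_moment_bound_general hk₁ (show 0 < 3 * (k : ℝ) by positivity)
end

section
/- There exists a constant C > 0 such that for every positive integer k, if U_k is a random variable with the Beta(k, k) distribution, then E|log(2U_k)| ≤ C·k^{-1/2}; that is, ∫₀¹ |log(2x)| · x^{k-1}(1-x)^{k-1}/B(k,k) dx ≤ C·k^{-1/2}. In particular η(k) := E|log(2U_k)| = O(k^{-1/2}) as k → ∞. -/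
/-!
Substituting `y = e^{2t}` in `|t| ≤ sinh |t|` gives `|log y| ≤ |y - 1| / √y`. At `y = 2x` this turns
the numerator of `E|log (2U)|`, for `U` of law `Beta(a, a)`, into at most
`∫₀¹ |2x - 1| (x(1 - x))^(a - 3/2) dx`, which is elementary because `1 - 2x` is the derivative of
`x(1 - x)`; it is of order `4^{-a} / a`. On the other hand `x(1 - x) = (1 - (2x - 1)²) / 4`, so by
Bernoulli's inequality the density stays comparable to its maximum on a window of width `1 / √a`
around `1/2`, and `B(a, a)` is at least of order `4^{-a} / √a`.
-/

open MeasureTheory Set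

lemma abs_log_le_abs_sub_one_div_sqrt {y : ℝ} (hy : 0 < y) :
    |Real.log y| ≤ |y - 1| / √y := by
  have hs : 0 < √y := Real.sqrt_pos.2 hy
  calc |Real.log y| = 2 * |Real.log √y| := by
        rw [Real.log_sqrt hy.le, abs_div, abs_two]; ring
    _ ≤ 2 * Real.sinh |Real.log √y| := by
        gcongr; exact Real.self_le_sinh_iff.2 (abs_nonneg _)
    _ = |√y - (√y)⁻¹| := by
        rw [← Real.abs_sinh, Real.sinh_log hs, abs_div, abs_two]; ring
    _ = |y - 1| / √y := by
        rw [← abs_of_pos hs, ← abs_div, abs_of_pos hs, sub_div, Real.div_sqrt, one_div]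

-- Passing to the exponent `p + 1` makes Bernoulli's inequality available for `p < 1` too.
lemma one_sub_add_one_mul_le_one_sub_rpow {p y : ℝ} (hp : 0 ≤ p) (hy₀ : 0 ≤ y) (hy₁ : y ≤ 1) :
    1 - (p + 1) * y ≤ (1 - y) ^ p :=
  calc 1 - (p + 1) * y = 1 + (p + 1) * -y := by ring
    _ ≤ (1 + -y) ^ (p + 1) := one_add_mul_self_le_rpow_one_add (by linarith) (by linarith)
    _ = (1 - y) ^ (p + 1) := by rw [← sub_eq_add_neg]
    _ ≤ (1 - y) ^ p :=
      Real.rpow_le_rpow_of_exponent_ge' (by linarith) (by linarith) hp (by linarith)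

lemma hasDerivAt_mul_one_sub_rpow_div {q x : ℝ} (hq : q ≠ 0) (hx : x * (1 - x) ≠ 0) :
    HasDerivAt (fun x : ℝ ↦ (x * (1 - x)) ^ q / q) ((1 - 2 * x) * (x * (1 - x)) ^ (q - 1)) x := by
  have h : HasDerivAt (fun x : ℝ ↦ x * (1 - x)) (1 - 2 * x) x :=
    ((hasDerivAt_id' x).mul ((hasDerivAt_id' x).const_sub 1)).congr_deriv (by ring)
  refine ((h.rpow_const (.inl hx)).div_const q).congr_deriv ?_
  field_simp

section Reflection

variable {E : Type*} [NormedAddCommGroup E] {f : ℝ → E} {c : ℝ}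

lemma intervalIntegrable_right_half_of_comp_sub_left (hf : ∀ x, f (c - x) = f x)
    (hfi : IntervalIntegrable f volume 0 (c / 2)) : IntervalIntegrable f volume (c / 2) c := by
  simpa only [hf, sub_zero, sub_half] using (hfi.comp_sub_left c).symm

lemma integral_eq_two_smul_of_comp_sub_left [NormedSpace ℝ E] (hf : ∀ x, f (c - x) = f x)
    (hfi : IntervalIntegrable f volume 0 (c / 2)) :
    ∫ x in 0..c, f x = (2 : ℝ) • ∫ x in 0..c / 2, f x := by
  have hreflect : ∫ x in c / 2..c, f x = ∫ x in 0..c / 2, f x := by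
    simpa only [hf, sub_self, sub_half] using intervalIntegral.integral_comp_sub_left f c
      (a := c / 2) (b := c)
  rw [← intervalIntegral.integral_add_adjacent_intervals hfi
    (intervalIntegrable_right_half_of_comp_sub_left hf hfi), hreflect, two_smul]

end Reflection

section BetaKernel

variable {q : ℝ}

lemma abs_mul_one_sub_rpow_comp_one_sub (x : ℝ) :
    |2 * (1 - x) - 1| * ((1 - x) * (1 - (1 - x))) ^ (q - 1) =
      |2 * x - 1| * (x * (1 - x)) ^ (q - 1) := by
  rw [abs_sub_comm]
  ring_nf

lemma hasDerivAt_mul_one_sub_rpow_div_of_mem_Ioo (hq : q ≠ 0) {x : ℝ}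
    (hx : x ∈ Ioo (0 : ℝ) (1 / 2)) :
    HasDerivAt (fun x : ℝ ↦ (x * (1 - x)) ^ q / q)
      (|2 * x - 1| * (x * (1 - x)) ^ (q - 1)) x := by
  obtain ⟨hx₀, hx₁⟩ := hx
  have hne : x * (1 - x) ≠ 0 := (mul_pos hx₀ (by linarith)).ne'
  simpa only [abs_of_neg (show 2 * x - 1 < 0 by linarith), neg_sub]
    using hasDerivAt_mul_one_sub_rpow_div hq hne

lemma continuous_mul_one_sub_rpow_div (hq : 0 ≤ q) :
    Continuous fun x : ℝ ↦ (x * (1 - x)) ^ q / q :=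
  (Continuous.rpow_const (by fun_prop) fun _ ↦ .inr hq).div_const q

lemma intervalIntegrable_left_half_abs_mul_one_sub_rpow (hq : 0 < q) :
    IntervalIntegrable (fun x : ℝ ↦ |2 * x - 1| * (x * (1 - x)) ^ (q - 1)) volume 0 (1 / 2) := by
  have hIoo : Ioo (min (0 : ℝ) (1 / 2)) (max 0 (1 / 2)) = Ioo 0 (1 / 2) := by norm_num
  refine intervalIntegral.intervalIntegrable_deriv_of_nonneg
    (continuous_mul_one_sub_rpow_div hq.le).continuousOn
    (fun x hx ↦ hasDerivAt_mul_one_sub_rpow_div_of_mem_Ioo hq.ne' (hIoo ▸ hx)) fun x hx ↦ ?_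
  obtain ⟨hx₀, hx₁⟩ := hIoo ▸ hx
  have : 0 ≤ 1 - x := by linarith
  positivity

lemma intervalIntegrable_abs_mul_one_sub_rpow (hq : 0 < q) :
    IntervalIntegrable (fun x : ℝ ↦ |2 * x - 1| * (x * (1 - x)) ^ (q - 1)) volume 0 1 :=
  have hleft := intervalIntegrable_left_half_abs_mul_one_sub_rpow hq
  hleft.trans (intervalIntegrable_right_half_of_comp_sub_left
    abs_mul_one_sub_rpow_comp_one_sub hleft)

lemma integral_abs_mul_one_sub_rpow (hq : 0 < q) :
    ∫ x in (0 : ℝ)..1, |2 * x - 1| * (x * (1 - x)) ^ (q - 1) = 2 * (1 / 4) ^ q / q := by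
  have hleft := intervalIntegrable_left_half_abs_mul_one_sub_rpow hq
  rw [integral_eq_two_smul_of_comp_sub_left abs_mul_one_sub_rpow_comp_one_sub hleft,
    intervalIntegral.integral_eq_sub_of_hasDerivAt_of_le (by norm_num)
      (continuous_mul_one_sub_rpow_div hq.le).continuousOn
      (fun x ↦ hasDerivAt_mul_one_sub_rpow_div_of_mem_Ioo hq.ne') hleft,
    zero_mul, Real.zero_rpow hq.ne', zero_div, sub_zero, smul_eq_mul, mul_div_assoc]
  norm_num

end BetaKernel

section Moment

variable {p : ℝ}

lemma abs_log_two_mul_mul_rpow_le {x : ℝ} (hx₀ : 0 < x) (hx₁ : x < 1) :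
    |Real.log (2 * x)| * (x ^ p * (1 - x) ^ p) ≤
      |2 * x - 1| * (x * (1 - x)) ^ (p + 1 / 2 - 1) := by
  have hs : 0 < x * (1 - x) := mul_pos hx₀ (by linarith)
  calc |Real.log (2 * x)| * (x ^ p * (1 - x) ^ p)
      ≤ |2 * x - 1| / √(2 * x) * (x ^ p * (1 - x) ^ p) := by
        have : 0 ≤ 1 - x := by linarith
        gcongr
        exact abs_log_le_abs_sub_one_div_sqrt (by linarith)
    _ = |2 * x - 1| / √(2 * x) * (x * (1 - x)) ^ p := by
        rw [Real.mul_rpow hx₀.le (by linarith)]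
    _ ≤ |2 * x - 1| / √(x * (1 - x)) * (x * (1 - x)) ^ p := by
        have hle : x * (1 - x) ≤ 2 * x := by nlinarith
        gcongr
    _ = |2 * x - 1| * (x * (1 - x)) ^ (p + 1 / 2 - 1) := by
        rw [show p + 1 / 2 - 1 = p - 1 / 2 by ring, Real.rpow_sub hs, ← Real.sqrt_eq_rpow]
        ring

lemma integral_abs_log_two_mul_mul_rpow_le (hp : -(1 / 2) < p) :
    ∫ x in (0 : ℝ)..1, |Real.log (2 * x)| * (x ^ p * (1 - x) ^ p) ≤
      (1 / 4) ^ p / (p + 1 / 2) := by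
  have hq : 0 < p + 1 / 2 := by linarith
  have hfi := (intervalIntegrable_iff_integrableOn_Ioo_of_le zero_le_one).1
    (intervalIntegrable_abs_mul_one_sub_rpow hq)
  calc ∫ x in (0 : ℝ)..1, |Real.log (2 * x)| * (x ^ p * (1 - x) ^ p)
      = ∫ x in Ioo (0 : ℝ) 1, |Real.log (2 * x)| * (x ^ p * (1 - x) ^ p) := by
        rw [intervalIntegral.integral_of_le zero_le_one, integral_Ioc_eq_integral_Ioo]
    _ ≤ ∫ x in Ioo (0 : ℝ) 1, |2 * x - 1| * (x * (1 - x)) ^ (p + 1 / 2 - 1) := by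
        refine integral_mono_of_nonneg
          (ae_restrict_of_forall_mem measurableSet_Ioo fun x ⟨hx₀, hx₁⟩ ↦ ?_) hfi
          (ae_restrict_of_forall_mem measurableSet_Ioo fun x ⟨hx₀, hx₁⟩ ↦
            abs_log_two_mul_mul_rpow_le hx₀ hx₁)
        have : 0 ≤ 1 - x := by linarith
        simp only [Pi.zero_apply]
        positivity
    _ = 2 * (1 / 4) ^ (p + 1 / 2) / (p + 1 / 2) := by
        rw [← integral_Ioc_eq_integral_Ioo, ← intervalIntegral.integral_of_le zero_le_one,
          integral_abs_mul_one_sub_rpow hq]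
    _ = (1 / 4) ^ p / (p + 1 / 2) := by
        have hsqrt : √(1 / 4 : ℝ) = 1 / 2 := by
          rw [show (1 / 4 : ℝ) = (1 / 2) ^ 2 by norm_num, Real.sqrt_sq (by norm_num)]
        rw [Real.rpow_add (by norm_num), ← Real.sqrt_eq_rpow, hsqrt]
        ring

lemma rpow_mul_one_sub_le_rpow_mul_one_sub_rpow (hp : 0 ≤ p) {x : ℝ} (hx : x ∈ Icc (0 : ℝ) 1) :
    (1 / 4) ^ p * (1 - (p + 1) * (2 * x - 1) ^ 2) ≤ x ^ p * (1 - x) ^ p := by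
  obtain ⟨hx₀, hx₁⟩ := hx
  have hsq : (2 * x - 1) ^ 2 ≤ 1 := by nlinarith
  calc (1 / 4) ^ p * (1 - (p + 1) * (2 * x - 1) ^ 2)
      ≤ (1 / 4) ^ p * (1 - (2 * x - 1) ^ 2) ^ p := by
        gcongr
        exact one_sub_add_one_mul_le_one_sub_rpow hp (sq_nonneg _) hsq
    _ = x ^ p * (1 - x) ^ p := by
        rw [← Real.mul_rpow (by norm_num) (by linarith), ← Real.mul_rpow hx₀ (by linarith)]
        ring_nf

lemma integral_one_sub_mul_sq {a : ℝ} (ha : 0 < a) :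
    ∫ x in (1 / 2 - 1 / (2 * √a))..(1 / 2 + 1 / (2 * √a)), (1 - a * (2 * x - 1) ^ 2) =
      2 / 3 / √a := by
  have hderiv (x : ℝ) :
      HasDerivAt (fun x : ℝ ↦ x - a * (2 * x - 1) ^ 3 / 6) (1 - a * (2 * x - 1) ^ 2) x := by
    have hlin : HasDerivAt (fun x : ℝ ↦ 2 * x - 1) 2 x := by
      simpa using ((hasDerivAt_id' x).const_mul 2).sub_const 1
    exact ((hasDerivAt_id' x).sub (((hlin.pow 3).const_mul a).div_const 6)).congr_deriv
      (by push_cast; ring)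
  have hcont : Continuous fun x : ℝ ↦ 1 - a * (2 * x - 1) ^ 2 := by fun_prop
  rw [intervalIntegral.integral_eq_sub_of_hasDerivAt (fun x _ ↦ hderiv x)
    (hcont.intervalIntegrable _ _)]
  have hs : √a ≠ 0 := (Real.sqrt_pos.2 ha).ne'
  have hsq : a = √a ^ 2 := (Real.sq_sqrt ha.le).symm
  generalize √a = s at hs hsq
  subst hsq
  field_simp
  ring

lemma le_integral_rpow_mul_one_sub_rpow (hp : 0 ≤ p) :
    (1 / 4) ^ p * (2 / 3 / √(p + 1)) ≤ ∫ x in (0 : ℝ)..1, x ^ p * (1 - x) ^ p := by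
  have hhalf : 1 / (2 * √(p + 1)) ≤ 1 / 2 := by
    have : 1 ≤ √(p + 1) := Real.one_le_sqrt.2 (by linarith)
    exact one_div_le_one_div_of_le two_pos (by linarith)
  have hpos : 0 ≤ 1 / (2 * √(p + 1)) := by positivity
  have hcont : Continuous fun x : ℝ ↦ x ^ p * (1 - x) ^ p :=
    (continuous_id.rpow_const fun _ ↦ .inr hp).mul
      (Continuous.rpow_const (by fun_prop) fun _ ↦ .inr hp)
  have hcont' : Continuous fun x : ℝ ↦ (1 / 4 : ℝ) ^ p * (1 - (p + 1) * (2 * x - 1) ^ 2) := by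
    fun_prop
  calc (1 / 4) ^ p * (2 / 3 / √(p + 1))
      = ∫ x in (1 / 2 - 1 / (2 * √(p + 1)))..(1 / 2 + 1 / (2 * √(p + 1))),
          (1 / 4) ^ p * (1 - (p + 1) * (2 * x - 1) ^ 2) := by
        rw [intervalIntegral.integral_const_mul, integral_one_sub_mul_sq (by linarith)]
    _ ≤ ∫ x in (1 / 2 - 1 / (2 * √(p + 1)))..(1 / 2 + 1 / (2 * √(p + 1))),
          x ^ p * (1 - x) ^ p :=
        intervalIntegral.integral_mono_on (by linarith) (hcont'.intervalIntegrable _ _)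
          (hcont.intervalIntegrable _ _) fun x hx ↦
            rpow_mul_one_sub_le_rpow_mul_one_sub_rpow hp
              ⟨by linarith [hx.1], by linarith [hx.2]⟩
    _ ≤ ∫ x in (0 : ℝ)..1, x ^ p * (1 - x) ^ p := by
        refine intervalIntegral.integral_mono_interval (by linarith) (by linarith) (by linarith)
          (ae_restrict_of_forall_mem measurableSet_Ioc fun x ⟨hx₀, hx₁⟩ ↦ ?_)
          (hcont.intervalIntegrable _ _)
        have : 0 ≤ 1 - x := by linarith
        simp only [Pi.zero_apply]
        positivity

end Moment

theorem beta_k_k_log_moment_bound_general {a : ℝ} (ha : 1 ≤ a) :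
    (∫ x in (0:ℝ)..1, |Real.log (2 * x)| * (x ^ (a - 1) * (1 - x) ^ (a - 1)) /
        (∫ t in (0:ℝ)..1, t ^ (a - 1) * (1 - t) ^ (a - 1))) ≤
      3 * a ^ (-(1 / 2 : ℝ)) := by
  have hnum := integral_abs_log_two_mul_mul_rpow_le (show -(1 / 2) < a - 1 by linarith)
  have hden := le_integral_rpow_mul_one_sub_rpow (show 0 ≤ a - 1 by linarith)
  have ha' : 0 < a - 1 / 2 := by linarith
  rw [sub_add_cancel] at hden
  rw [show a - 1 + 1 / 2 = a - 1 / 2 by ring] at hnum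
  rw [intervalIntegral.integral_div, Real.rpow_neg (by linarith), ← Real.sqrt_eq_rpow]
  calc _ ≤ (1 / 4) ^ (a - 1) / (a - 1 / 2) / ((1 / 4) ^ (a - 1) * (2 / 3 / √a)) :=
        div_le_div₀ (by positivity) hnum (by positivity) hden
    _ = 3 / 2 * √a / (a - 1 / 2) := by field_simp
    _ ≤ 3 / 2 * √a / (a / 2) := by gcongr; linarith
    _ = 3 * (√a / a) := by field_simp
    _ = 3 * (√a)⁻¹ := by rw [Real.sqrt_div_self]

/-- There is a constant `C > 0` such that for every `k ≥ 1`, if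
`U_k ~ Beta(k, k)` then `E|log(2 U_k)| ≤ C k^{-1/2}`, i.e.
`∫₀¹ |log(2x)| · x^{k-1}(1-x)^{k-1} / B(k,k) dx ≤ C · k^{-1/2}`,
where `B(k,k) = ∫₀¹ x^{k-1}(1-x)^{k-1} dx`. In particular
`η(k) = E|log(2 U_k)| = O(k^{-1/2})` as `k → ∞`. -/
theorem beta_k_k_log_moment_bound :
    ∃ C : ℝ, 0 < C ∧ ∀ k : ℕ, 0 < k →
      (∫ x in (0:ℝ)..1, |Real.log (2 * x)| * (x ^ (k - 1) * (1 - x) ^ (k - 1)) /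
          (∫ t in (0:ℝ)..1, t ^ (k - 1) * (1 - t) ^ (k - 1))) ≤
        C * (k : ℝ) ^ (-(1 / 2 : ℝ)) :=
  ⟨3, three_pos, fun k hk ↦ by
    simpa only [← Real.rpow_natCast, Nat.cast_pred hk] using
      beta_k_k_log_moment_bound_general (Nat.one_le_cast.2 hk)⟩
end
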